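/- Let α ∈ (0,1), r, μ_d ∈ ℝ, σ > 0, σ̂ > 0, μ̂ ∈ ℝ, λ > 0, p ∈ [0,1] and ρ ∈ (−1,1). Set c = μ̂ − σ̂²/2, U(x) = x^{1−α}/(1−α) and η(x) = exp(σ̂x + c) − 1. Then the constant M := sup_{φ∈[0,1]} { φ(μ_d − r) − (1/2)αφ²σ² + λ(1−p) ∫_ℝ (U(1 + φη(x)) − U(1)) N_{0,1}(dx) } + λp ∫_ℝ [ sup_{φ∈[0,1]} ∫_ℝ (U(1 + φη(y)) − U(1)) N_{ρz, 1−ρ²}(dy) ] N_{0,1}(dz) is a finite real number. -/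

import Mathlib

open MeasureTheory ProbabilityTheory Real
open scoped NNReal

/-- The power utility function `U(x) = x^(1-α)/(1-α)` (real power). -/
noncomputable def U (α x : ℝ) : ℝ := x ^ (1 - α) / (1 - α)

lemma U_bound (α : ℝ) (hα : α ∈ Set.Ioo (0 : ℝ) 1) (φ E : ℝ) (hφ : φ ∈ Set.Icc (0 : ℝ) 1)
    (hE : 0 < E) : |U α (1 + φ * (E - 1)) - U α 1| ≤ (3 + E) / (1 - α) := by
  obtain ⟨h0, h1⟩ := hα
  obtain ⟨hp0, hp1⟩ := hφ
  have hb : 0 < 1 - α := by linarith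
  have hW : 0 ≤ 1 + φ * (E - 1) := by nlinarith [mul_nonneg hp0 hE.le]
  have hW2 : 1 + φ * (E - 1) ≤ 1 + E := by nlinarith [mul_nonneg (sub_nonneg.2 hp1) hE.le]
  have hpow : (1 + φ * (E - 1)) ^ (1 - α) ≤ 2 + E := by
    calc (1 + φ * (E - 1)) ^ (1 - α) ≤ (1 + E) ^ (1 - α) :=
          Real.rpow_le_rpow hW hW2 hb.le
      _ ≤ (1 + E) ^ (1 : ℝ) := Real.rpow_le_rpow_of_exponent_le (by linarith) (by linarith)
      _ = 1 + E := Real.rpow_one _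
      _ ≤ 2 + E := by linarith
  have hpow0 := Real.rpow_nonneg hW (1 - α)
  unfold U
  rw [Real.one_rpow, ← sub_div, abs_div, abs_of_pos hb]
  gcongr
  rw [abs_le]
  constructor <;> linarith

lemma U_mono (α : ℝ) (hα : α ∈ Set.Ioo (0 : ℝ) 1) (φ E E' : ℝ) (hφ : φ ∈ Set.Icc (0 : ℝ) 1)
    (hE : 0 < E) (h : E ≤ E') :
    U α (1 + φ * (E - 1)) - U α 1 ≤ U α (1 + φ * (E' - 1)) - U α 1 := by
  obtain ⟨h0, h1⟩ := hα
  obtain ⟨hp0, hp1⟩ := hφ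
  have hb : 0 < 1 - α := by linarith
  have hW : 0 ≤ 1 + φ * (E - 1) := by nlinarith [mul_nonneg hp0 hE.le]
  have hW2 : 1 + φ * (E - 1) ≤ 1 + φ * (E' - 1) := by gcongr
  unfold U
  have := Real.rpow_le_rpow hW hW2 hb.le
  gcongr

lemma exp_int (s c m : ℝ) (v : ℝ≥0) :
    Integrable (fun x => Real.exp (s * x + c)) (gaussianReal m v) := by
  simp_rw [Real.exp_add]
  exact (integrable_exp_mul_gaussianReal s).mul_const _

lemma bound_int (α s c m : ℝ) (v : ℝ≥0) :
    Integrable (fun x => (3 + Real.exp (s * x + c)) / (1 - α)) (gaussianReal m v) :=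
  ((integrable_const _).add (exp_int s c m v)).div_const _

lemma bound_val (α s c m : ℝ) (v : ℝ≥0) :
    ∫ x, (3 + Real.exp (s * x + c)) / (1 - α) ∂(gaussianReal m v)
      = (3 + Real.exp (s * m + (v * s ^ 2 / 2 + c))) / (1 - α) := by
  have h : ∫ x, Real.exp (s * x) ∂(gaussianReal m v) = Real.exp (m * s + v * s ^ 2 / 2) :=
    mgf_gaussianReal (p := gaussianReal m v) (X := id) (by simp) s
  rw [integral_div, integral_add (integrable_const _) (exp_int s c m v)]
  simp_rw [Real.exp_add _ c]
  rw [integral_mul_const, h, ← Real.exp_add, integral_const]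
  simp
  ring_nf

lemma util_int (α : ℝ) (hα : α ∈ Set.Ioo (0 : ℝ) 1) (s c m φ : ℝ) (v : ℝ≥0)
    (hφ : φ ∈ Set.Icc (0 : ℝ) 1) :
    Integrable (fun x => U α (1 + φ * (Real.exp (s * x + c) - 1)) - U α 1)
      (gaussianReal m v) := by
  refine (bound_int α s c m v).mono' ?_ (ae_of_all _ fun x => ?_)
  · unfold U
    exact Measurable.aestronglyMeasurable (by fun_prop)
  · exact U_bound α hα φ _ hφ (Real.exp_pos _)

lemma util_le (α : ℝ) (hα : α ∈ Set.Ioo (0 : ℝ) 1) (s c m φ : ℝ) (v : ℝ≥0)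
    (hφ : φ ∈ Set.Icc (0 : ℝ) 1) :
    ∫ x, (U α (1 + φ * (Real.exp (s * x + c) - 1)) - U α 1) ∂(gaussianReal m v)
      ≤ (3 + Real.exp (s * m + (v * s ^ 2 / 2 + c))) / (1 - α) := by
  rw [← bound_val]
  exact integral_mono (util_int α hα s c m φ v hφ) (bound_int α s c m v)
    fun x => (le_abs_self _).trans (U_bound α hα φ _ hφ (Real.exp_pos _))

lemma util_mono (α : ℝ) (hα : α ∈ Set.Ioo (0 : ℝ) 1) (s c m m' φ : ℝ) (v : ℝ≥0) (hs : 0 < s)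
    (hφ : φ ∈ Set.Icc (0 : ℝ) 1) (hm : m ≤ m') :
    ∫ x, (U α (1 + φ * (Real.exp (s * x + c) - 1)) - U α 1) ∂(gaussianReal m v)
      ≤ ∫ x, (U α (1 + φ * (Real.exp (s * x + c) - 1)) - U α 1) ∂(gaussianReal m' v) := by
  have key : ∀ a : ℝ,
      ∫ x, (U α (1 + φ * (Real.exp (s * x + c) - 1)) - U α 1) ∂(gaussianReal a v)
      = ∫ x, (U α (1 + φ * (Real.exp (s * x + (s * a + c)) - 1)) - U α 1)
          ∂(gaussianReal 0 v) := by
    intro a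
    have h := gaussianReal_map_add_const (μ := 0) (v := v) a
    rw [zero_add] at h
    rw [← h, integral_map (by fun_prop)
      (by unfold U; exact Measurable.aestronglyMeasurable (by fun_prop))]
    congr 1
    ext x
    rw [show s * (x + a) + c = s * x + (s * a + c) by ring]
  rw [key m, key m']
  refine integral_mono (util_int α hα s _ 0 φ v hφ) (util_int α hα s _ 0 φ v hφ) fun x => ?_
  exact U_mono α hα φ _ _ hφ (Real.exp_pos _) (by gcongr)

/-- In the Gaussian case study, the certainty-equivalent growth rate constant
`M = sup_{φ∈[0,1]} {φ(μd-r) - ½αφ²σ² + λ(1-p)∫(U(1+φη)-U(1))dN(0,1)}`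
`    + λp ∫ [sup_{φ∈[0,1]} ∫(U(1+φη)-U(1))dN(ρz,1-ρ²)] dN(0,1)(z)`
is a finite real number: all integrands are integrable, the suprema are over
nonempty sets that are bounded above, and the signal-optimal value is integrable
with respect to the signal distribution. -/
theorem growth_rate_constant_finite
    (α : ℝ) (hα : α ∈ Set.Ioo (0 : ℝ) 1)
    (r μd σ σh μh lam p ρ c : ℝ)
    (hσ : 0 < σ) (hσh : 0 < σh) (hlam : 0 < lam)
    (hp : p ∈ Set.Icc (0 : ℝ) 1) (hρ : ρ ∈ Set.Ioo (-1 : ℝ) 1)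
    (hc : c = μh - σh ^ 2 / 2)
    (η : ℝ → ℝ) (hη : η = fun x => Real.exp (σh * x + c) - 1)
    (M : ℝ)
    (hM : M = sSup ((fun φ => φ * (μd - r) - (1 / 2) * α * φ ^ 2 * σ ^ 2
          + lam * (1 - p) * ∫ x, (U α (1 + φ * η x) - U α 1) ∂(gaussianReal 0 1))
            '' Set.Icc (0 : ℝ) 1)
        + lam * p * ∫ z, sSup ((fun φ =>
            ∫ y, (U α (1 + φ * η y) - U α 1)
              ∂(gaussianReal (ρ * z) (Real.toNNReal (1 - ρ ^ 2)))) '' Set.Icc (0 : ℝ) 1)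
          ∂(gaussianReal 0 1)) :
    (∀ φ ∈ Set.Icc (0 : ℝ) 1,
        Integrable (fun x => U α (1 + φ * η x) - U α 1) (gaussianReal 0 1)) ∧
    BddAbove ((fun φ => φ * (μd - r) - (1 / 2) * α * φ ^ 2 * σ ^ 2
        + lam * (1 - p) * ∫ x, (U α (1 + φ * η x) - U α 1) ∂(gaussianReal 0 1))
          '' Set.Icc (0 : ℝ) 1) ∧
    (∀ z : ℝ, ∀ φ ∈ Set.Icc (0 : ℝ) 1,
        Integrable (fun y => U α (1 + φ * η y) - U α 1)
          (gaussianReal (ρ * z) (Real.toNNReal (1 - ρ ^ 2)))) ∧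
    (∀ z : ℝ, BddAbove ((fun φ =>
        ∫ y, (U α (1 + φ * η y) - U α 1)
          ∂(gaussianReal (ρ * z) (Real.toNNReal (1 - ρ ^ 2)))) '' Set.Icc (0 : ℝ) 1)) ∧
    Integrable (fun z => sSup ((fun φ =>
        ∫ y, (U α (1 + φ * η y) - U α 1)
          ∂(gaussianReal (ρ * z) (Real.toNNReal (1 - ρ ^ 2)))) '' Set.Icc (0 : ℝ) 1))
      (gaussianReal 0 1) := by
  subst hη
  clear hM M
  have hb : 0 < 1 - α := by linarith [hα.2]
  have bdd : ∀ (m : ℝ) (v : ℝ≥0), BddAbove ((fun φ =>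
        ∫ y, (U α (1 + φ * (Real.exp (σh * y + c) - 1)) - U α 1)
          ∂(gaussianReal m v)) '' Set.Icc (0 : ℝ) 1) := by
    rintro m v
    refine ⟨(3 + Real.exp (σh * m + (v * σh ^ 2 / 2 + c))) / (1 - α), ?_⟩
    rintro _ ⟨φ, hφ, rfl⟩
    exact util_le α hα σh c m φ v hφ
  refine ⟨fun φ hφ => util_int α hα σh c 0 φ 1 hφ, ?_,
    fun z φ hφ => util_int α hα σh c _ φ _ hφ, fun z => bdd _ _, ?_⟩
  · refine ⟨|μd - r| + lam * (1 - p) *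
      ((3 + Real.exp (σh * 0 + ((1 : ℝ≥0) * σh ^ 2 / 2 + c))) / (1 - α)), ?_⟩
    rintro _ ⟨φ, hφ, rfl⟩
    have h1 := util_le α hα σh c 0 φ 1 hφ
    have h2 : 0 ≤ lam * (1 - p) := mul_nonneg hlam.le (by linarith [hp.2])
    have h3 : φ * (μd - r) ≤ |μd - r| := by
      calc φ * (μd - r) ≤ φ * |μd - r| := mul_le_mul_of_nonneg_left (le_abs_self _) hφ.1
        _ ≤ 1 * |μd - r| := mul_le_mul_of_nonneg_right hφ.2 (abs_nonneg _)
        _ = _ := one_mul _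
    have h4 : 0 ≤ (1 / 2) * α * φ ^ 2 * σ ^ 2 := by
      have := hα.1
      positivity
    have h5 := mul_le_mul_of_nonneg_left h1 h2
    simp only
    linarith
  · set v := Real.toNNReal (1 - ρ ^ 2) with hv
    set G : ℝ → ℝ := fun m => sSup ((fun φ =>
        ∫ y, (U α (1 + φ * (Real.exp (σh * y + c) - 1)) - U α 1)
          ∂(gaussianReal m v)) '' Set.Icc (0 : ℝ) 1) with hG
    have ne : (Set.Icc (0 : ℝ) 1).Nonempty := ⟨0, by simp⟩
    have hGm : Monotone G := by
      intro m m' hm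
      refine csSup_le (ne.image _) ?_
      rintro _ ⟨φ, hφ, rfl⟩
      exact (util_mono α hα σh c m m' φ v hσh hφ hm).trans
        (le_csSup (bdd m' v) ⟨φ, hφ, rfl⟩)
    have hG0 : ∀ m, 0 ≤ G m := by
      intro m
      refine le_csSup (bdd m v) ⟨0, by simp, by simp⟩
    have hG1 : ∀ m, G m ≤ (3 + Real.exp (σh * m + (v * σh ^ 2 / 2 + c))) / (1 - α) := by
      intro m
      refine csSup_le (ne.image _) ?_
      rintro _ ⟨φ, hφ, rfl⟩
      exact util_le α hα σh c m φ v hφ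
    change Integrable (fun z => G (ρ * z)) (gaussianReal 0 1)
    refine (bound_int α (σh * ρ) (v * σh ^ 2 / 2 + c) 0 1).mono'
      (hGm.measurable.comp (measurable_const_mul ρ)).aestronglyMeasurable
      (ae_of_all _ fun z => ?_)
    rw [Real.norm_of_nonneg (hG0 _), mul_assoc]
    exact hG1 _
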